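/- There exist a Banach space Z and a closed linear subspace Y of Z such that Y is isomorphic (as a Banach space) to c₀, the quotient Z/Y is isomorphic to c₀(Γ) for an index set Γ of cardinality 𝔠 (the continuum), and Z is not a C-space. Moreover, Z can be chosen to be a 1-complemented subspace of C(L) for some compact Hausdorff space L. -/

import Mathlib

open scoped ZeroAtInfty

/-- A Banach space is a *C-space* if it is isomorphic (via a continuous linear
equivalence) to `C(K, ℝ)` for some compact Hausdorff space `K`. -/
def IsCSpace (X : Type*) [NormedAddCommGroup X] [NormedSpace ℝ X] : Prop :=
  ∃ (K : Type) (_ : TopologicalSpace K) (_ : CompactSpace K) (_ : T2Space K),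
    Nonempty (X ≃L[ℝ] C(K, ℝ))

/-!
Let `L` consist of `0` and of points `±p j`, for `j` in `ℕ ⊕ I`, in the cube `{-1, 0, 1}^(ℕ ⊕ I)`:
the coordinates of the isolated points `p n` in `I` are the signs of an almost disjoint family
`(s ξ)` of signed subsets of `ℕ`, and `p ξ` is a unit vector. Let `Z` be the space of odd functions
on `L`. Taking odd parts is a projection of norm one, and restricting `Z` to the points `p ξ` gives
the quotient `c₀(I)` with kernel `c₀`.

An isomorphism from `Z` to some `C(K)` would provide bounded functionals `l k`, multiples of point
evaluations, which are at least one at the `k`th coordinate function and for which the sequence of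
all `|l k z|` is again of the form `l k z'`. Up to countably many defects, `l k` maps the coordinate
function of `ξ` to `∑ n, ν k n * s ξ n` with `ν k n` the values of `l k` at the coordinate functions
in `ℕ`. As the coordinate functions span a dense subspace, the absolute value of this sequence would
be within `1/4` of a rational combination of such sequences, of columns of `ν` and of countably many
others. The signs are chosen to prevent this for every matrix `ν` with absolutely summable rows and
large diagonal. There are `𝔠` tasks of this kind, and a transfinite recursion of length `𝔠` treats
them one at a time: by Rosenthal's lemma the branches of a binary tree supply `𝔠` candidates at each
stage, and each of the fewer than `𝔠` earlier requirements excludes only countably many of them.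
-/

section

open Function Set

/-! ### Disjointly supported functions and absolutely summable rows -/

section Disjointness

variable {J X : Type*} [TopologicalSpace X] [CompactSpace X]

lemma abs_sum_le_of_pairwise_mul_eq_zero {F : Finset J} {a : J → ℝ} {r : ℝ} (hr : 0 ≤ r)
    (ha : ∀ i ∈ F, |a i| ≤ r) (hd : (F : Set J).Pairwise fun i j => a i * a j = 0) :
    |∑ i ∈ F, a i| ≤ r := by
  by_cases h : ∃ i ∈ F, a i ≠ 0
  · obtain ⟨i, hi, hai⟩ := h
    rw [Finset.sum_eq_single_of_mem i hi fun j hj hji =>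
      (mul_eq_zero.1 (hd hj hi hji)).resolve_right hai]
    exact ha i hi
  · push Not at h
    simpa [Finset.sum_eq_zero h] using hr

lemma norm_sum_smul_le_of_pairwise_mul_eq_zero {F : Finset J} {φ : J → C(X, ℝ)} {c : J → ℝ} {r : ℝ}
    (hr : 0 ≤ r) (hφ : ∀ i ∈ F, ‖φ i‖ ≤ 1) (hc : ∀ i ∈ F, |c i| ≤ r)
    (hd : (F : Set J).Pairwise fun i j => φ i * φ j = 0) : ‖∑ i ∈ F, c i • φ i‖ ≤ r := by
  refine (ContinuousMap.norm_le _ hr).2 fun x => ?_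
  simp only [ContinuousMap.sum_apply, ContinuousMap.smul_apply, smul_eq_mul, Real.norm_eq_abs]
  refine abs_sum_le_of_pairwise_mul_eq_zero hr (fun i hi => ?_) fun i hi j hj hij => ?_
  · rw [abs_mul]
    exact (mul_le_mul (hc i hi) (((φ i).norm_coe_le_norm x).trans (hφ i hi)) (abs_nonneg _)
      hr).trans_eq (mul_one r)
  · have h0 : φ i x * φ j x = 0 := congr($(hd hi hj hij) x)
    beta_reduce
    rw [mul_mul_mul_comm, h0, mul_zero]

open Filter Topology in
lemma summable_smul_of_pairwise_mul_eq_zero {φ : J → C(X, ℝ)} {c : J → ℝ}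
    (hφ : ∀ i, ‖φ i‖ ≤ 1) (hc : Tendsto c cofinite (𝓝 0))
    (hd : Pairwise fun i j => φ i * φ j = 0) : Summable fun i => c i • φ i := by
  refine summable_iff_vanishing_norm.2 fun ε hε => ?_
  have hfin : {i | ¬ |c i| < ε / 2}.Finite := by
    simpa using (Metric.tendsto_nhds.1 hc) (ε / 2) (half_pos hε)
  refine ⟨hfin.toFinset, fun F hF => ?_⟩
  refine (norm_sum_smul_le_of_pairwise_mul_eq_zero (half_pos hε).le (fun i _ => hφ i)
    (fun i hi => ?_) (hd.set_pairwise _)).trans_lt (half_lt_self hε)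
  by_contra h
  exact Finset.disjoint_left.1 hF hi (hfin.mem_toFinset.2 fun h' => h h'.le)

end Disjointness

section AbsolutelySummable

variable {J : Type*} {a b : J → ℝ} {C : ℝ}

lemma summable_mul_of_sum_abs_le (ha : ∀ F : Finset J, ∑ j ∈ F, |a j| ≤ C)
    (hb : ∀ j, |b j| ≤ 1) : Summable fun j => a j * b j := by
  refine (summable_of_sum_le (fun j => abs_nonneg (a j)) ha).of_norm_bounded fun j => ?_
  rw [Real.norm_eq_abs, abs_mul]
  exact mul_le_of_le_one_right (abs_nonneg _) (hb j)

lemma abs_tsum_mul_sub_sum_le {F : Finset J} (hs : Summable fun j => a j * b j)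
    (ha : ∀ G, Disjoint F G → ∑ j ∈ G, |a j| ≤ C) (hb : ∀ j ∉ F, |b j| ≤ 1) :
    |∑' j, a j * b j - ∑ j ∈ F, a j * b j| ≤ C := by
  classical
  refine le_of_tendsto (hs.hasSum.sub_const _).abs ?_
  filter_upwards [Filter.eventually_ge_atTop F] with G hFG
  rw [← Finset.sum_sdiff hFG, add_sub_cancel_right]
  calc |∑ j ∈ G \ F, a j * b j| ≤ ∑ j ∈ G \ F, |a j * b j| := Finset.abs_sum_le_sum_abs _ _
    _ ≤ ∑ j ∈ G \ F, |a j| := Finset.sum_le_sum fun j hj => by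
      rw [abs_mul]
      exact mul_le_of_le_one_right (abs_nonneg _) (hb j (Finset.mem_sdiff.1 hj).2)
    _ ≤ C := ha _ Finset.disjoint_sdiff

end AbsolutelySummable

/-! ### Rosenthal's lemma and branches of the binary tree -/

section Pairing

variable {J J' K : Type*}

/-- The bounded sequence `k ↦ ∑ j, ν k j * s j`, where `ν` is a matrix with absolutely summable rows
and `s` is a sequence of signs. -/
noncomputable def pairing (ν : K → J → ℝ) (s : J → SignType) (k : K) : ℝ := ∑' j, ν k j * s j

lemma abs_cast_signType_le_one (s : SignType) : |(s : ℝ)| ≤ 1 := by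
  cases s <;> simp

lemma abs_pairing_extend_sub_le {ν : K → J → ℝ} {f : J' → J} (hf : Injective f) {k : K} {i : J'}
    {C δ : ℝ} (hC : ∀ F : Finset J, ∑ j ∈ F, |ν k j| ≤ C)
    (hδ : ∀ F : Finset J', i ∉ F → ∑ j ∈ F, |ν k (f j)| ≤ δ) (s : J' → SignType) :
    |pairing ν (extend f s 0) k - ν k (f i) * s i| ≤ δ := by
  have hpair : pairing ν (extend f s 0) k = ∑' j, ν k (f j) * s j := by
    rw [pairing, ← hf.tsum_eq]
    · simp only [hf.extend_apply]
    · refine support_subset_iff'.2 fun j hj => ?_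
      rw [extend_apply' _ _ _ hj, Pi.zero_apply, SignType.coe_zero, mul_zero]
  have hs : Summable fun j => ν k (f j) * s j := by
    refine summable_mul_of_sum_abs_le (C := C) (fun F => ?_) fun j => abs_cast_signType_le_one _
    simpa using hC (F.map ⟨f, hf⟩)
  rw [hpair, ← Finset.sum_singleton (fun j => ν k (f j) * (s j : ℝ)) i]
  exact abs_tsum_mul_sub_sum_le hs (fun G hG => hδ G (by simpa using hG))
    fun j _ => abs_cast_signType_le_one _

end Pairing

section Rosenthal

-- The induction behind Rosenthal's lemma: `Nat.pair` splits `ℕ` into infinitely many infinite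
-- pieces. Either one piece has all its off-diagonal row sums below `δ`, or every piece has a row
-- violating this, and discarding the rest lowers by `δ` the bound on the row sums.
lemma exists_injective_sum_offDiag_le_of_le_mul (δ : ℝ) (n : ℕ) (b : ℕ → ℕ → ℝ)
    (hb : ∀ k, ∀ F : Finset ℕ, k ∉ F → ∑ j ∈ F, b k j ≤ (n + 1) * δ) :
    ∃ h : ℕ → ℕ, Injective h ∧ ∀ k, ∀ F : Finset ℕ, k ∉ F → ∑ j ∈ F, b (h k) (h j) ≤ δ := by
  induction n generalizing b with
  | zero => exact ⟨id, injective_id, by simpa using hb⟩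
  | succ n ih =>
    by_cases hpiece : ∃ p, ∀ k, ∀ F : Finset ℕ, k ∉ F →
        ∑ j ∈ F, b (Nat.pair p k) (Nat.pair p j) ≤ δ
    · obtain ⟨p, hp⟩ := hpiece
      exact ⟨Nat.pair p, fun i j hij => (Nat.pair_eq_pair.1 hij).2, hp⟩
    push Not at hpiece
    choose i s his hs using hpiece
    have hi : Injective fun q => Nat.pair q (i q) := fun x y hxy => (Nat.pair_eq_pair.1 hxy).1
    have hrow : ∀ p, ∀ F : Finset ℕ, p ∉ F →
        ∑ q ∈ F, b (Nat.pair p (i p)) (Nat.pair q (i q)) ≤ (n + 1) * δ := fun p F hpF => by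
      have hdisj : Disjoint (F.image fun q => Nat.pair q (i q)) ((s p).image (Nat.pair p)) := by
        simp only [Finset.disjoint_left, Finset.mem_image, not_exists, not_and,
          forall_exists_index, and_imp]
        rintro _ q hq rfl r _ hr
        exact hpF ((Nat.pair_eq_pair.1 hr).1 ▸ hq)
      have hnot : Nat.pair p (i p) ∉
          (F.image fun q => Nat.pair q (i q)) ∪ (s p).image (Nat.pair p) := by
        simp only [Finset.mem_union, Finset.mem_image, Nat.pair_eq_pair, not_or, not_exists,
          not_and]
        exact ⟨fun q hq hqp => absurd (hqp ▸ hq) hpF, fun q hq _ hqi => his p (hqi ▸ hq)⟩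
      have hsum := hb _ _ hnot
      rw [Finset.sum_union hdisj, Finset.sum_image hi.injOn,
        Finset.sum_image fun x _ y _ hxy => (Nat.pair_eq_pair.1 hxy).2] at hsum
      push_cast at hsum
      linarith [hs p]
    obtain ⟨h, hinj, hh⟩ := ih (fun p q => b (Nat.pair p (i p)) (Nat.pair q (i q))) hrow
    exact ⟨fun p => Nat.pair (h p) (i (h p)), hi.comp hinj, hh⟩

lemma exists_injective_sum_offDiag_le {J K : Type*} [Countable J] {a : K → K → ℝ} {C δ : ℝ}
    (hδ : 0 < δ) (ha : ∀ k, ∀ F : Finset K, ∑ j ∈ F, a k j ≤ C) {f : ℕ → K} (hf : Injective f) :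
    ∃ g : J → K, Injective g ∧ range g ⊆ range f ∧
      ∀ k, ∀ F : Finset J, k ∉ F → ∑ j ∈ F, a (g k) (g j) ≤ δ := by
  obtain ⟨n, hn⟩ := exists_nat_ge (C / δ)
  obtain ⟨h, hh, hle⟩ := exists_injective_sum_offDiag_le_of_le_mul δ n
    (fun k j => a (f k) (f j)) fun k F _ => by
      have hsum := ha (f k) (F.map ⟨f, hf⟩)
      rw [Finset.sum_map] at hsum
      rw [div_le_iff₀ hδ] at hn
      exact hsum.trans (by linarith)
  obtain ⟨e, he⟩ := Countable.exists_injective_nat J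
  refine ⟨f ∘ h ∘ e, hf.comp (hh.comp he), range_comp_subset_range _ _, fun k F hkF => ?_⟩
  simpa using hle (e k) (F.map ⟨e, he⟩) (by simpa [he.eq_iff] using hkF)

end Rosenthal

section BranchSigns

/-- The rows of the square matrix `ν` are uniformly bounded in `ℓ₁` and its diagonal is bounded away
from `0`. -/
def HasLargeDiagonal {J : Type*} (ν : J → J → ℝ) : Prop :=
  (∃ C, ∀ k, ∀ F : Finset J, ∑ j ∈ F, |ν k j| ≤ C) ∧ ∀ k, 1 ≤ |ν k k|

variable {α : Type*}

lemma finite_range_res_inter {x y : ℕ → α} (h : x ≠ y) :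
    (range (PiNat.res x) ∩ range (PiNat.res y)).Finite := by
  obtain ⟨i, hi⟩ := ne_iff.1 h
  refine ((finite_Iic i).image (PiNat.res x)).subset ?_
  rintro _ ⟨⟨m, rfl⟩, ⟨n, hn⟩⟩
  obtain rfl : n = m := by simpa using congrArg List.length hn
  exact ⟨n, not_lt.1 fun hlt => hi (PiNat.res_eq_res.1 hn hlt).symm, rfl⟩

lemma injective_res (x : ℕ → α) : Injective (PiNat.res x) := fun m n h => by
  simpa using congrArg List.length h

open Classical in
/-- A sequence of signs living on the branch `x` of the binary tree. Each node of the branch carries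
two signs, `σ (u, true)` and `-σ (u, false)`. -/
noncomputable def branchSigns (σ : List α × Bool → SignType) (x : ℕ → α)
    (p : List α × Bool) : SignType :=
  if p.1 ∈ range (PiNat.res x) then (if p.2 then σ p else -σ p) else 0

variable {σ : List α × Bool → SignType} {x y : ℕ → α}

lemma finite_support_branchSigns_inter (h : x ≠ y) :
    (support (branchSigns σ x) ∩ support (branchSigns σ y)).Finite := by
  refine ((finite_range_res_inter h).prod (finite_univ (α := Bool))).subset ?_
  rintro ⟨u, b⟩ ⟨hx, hy⟩
  simp only [mem_support, branchSigns, ne_eq, ite_eq_right_iff, Classical.not_imp] at hx hy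
  exact ⟨⟨hx.1, hy.1⟩, mem_univ b⟩

end BranchSigns

/-! ### Approximation by rational combinations -/

section Distinguish

variable {J K X : Type*}

/-- For each pair of distinct members of the family `s`, some row of the matrix `ν` pairs to at
least `3/4` with the first and to almost nothing with the second, and some row pairs to at most
`-3/4` with the first and to almost nothing with the second. -/
def RowsDistinguish (ν : K → J → ℝ) (s : X → J → SignType) : Prop :=
  ∀ ⦃x y⦄, x ≠ y →
    (∃ k, 3 / 4 ≤ pairing ν (s x) k ∧ |pairing ν (s y) k| ≤ 1 / 4) ∧
      ∃ k, pairing ν (s x) k ≤ -(3 / 4) ∧ |pairing ν (s y) k| ≤ 1 / 4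

lemma rowsDistinguish_extend_branchSigns {α : Type*} {ν : J → J → ℝ} (hν : HasLargeDiagonal ν)
    {f : List α × Bool → J} (hf : Injective f)
    (hδ : ∀ k, ∀ F : Finset (List α × Bool), k ∉ F → ∑ j ∈ F, |ν (f k) (f j)| ≤ 1 / 4) :
    RowsDistinguish ν fun x : ℕ → α =>
      extend f (branchSigns (fun p => SignType.sign (ν (f p) (f p))) x) 0 := by
  obtain ⟨⟨C, hC⟩, hdiag⟩ := hν
  intro x y hxy
  obtain ⟨u, hux, huy⟩ : ∃ u ∈ range (PiNat.res x), u ∉ range (PiNat.res y) := by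
    by_contra! h
    exact infinite_range_of_injective (injective_res x)
      ((finite_range_res_inter hxy).subset fun u hu => ⟨hu, h u hu⟩)
  have hdiag_estimate := fun z k => abs_pairing_extend_sub_le hf (hC (f k)) (hδ k)
    (branchSigns (fun p => SignType.sign (ν (f p) (f p))) z)
  have hy : ∀ b, |pairing ν (extend f (branchSigns _ y) 0) (f (u, b))| ≤ 1 / 4 := fun b => by
    simpa only [branchSigns, if_neg huy, SignType.coe_zero, mul_zero, sub_zero]
      using hdiag_estimate y (u, b)
  refine ⟨⟨f (u, true), ?_, hy true⟩, ⟨f (u, false), ?_, hy false⟩⟩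
  · have hx := abs_le.1 (hdiag_estimate x (u, true))
    simp only [branchSigns, if_pos hux, if_true, self_mul_sign] at hx
    linarith [hx.1, hdiag (f (u, true))]
  · have hx := abs_le.1 (hdiag_estimate x (u, false))
    simp only [branchSigns, if_pos hux, Bool.false_eq_true, if_false, SignType.coe_neg, mul_neg,
      self_mul_sign] at hx
    linarith [hx.2, hdiag (f (u, false))]

lemma exists_rowsDistinguish {ν : J → J → ℝ} (hν : HasLargeDiagonal ν) {f₀ : ℕ → J}
    (hf₀ : Injective f₀) :
    ∃ s : (ℕ → Bool) → J → SignType, (∀ x, support (s x) ⊆ range f₀) ∧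
      (Pairwise fun x y => (support (s x) ∩ support (s y)).Finite) ∧ RowsDistinguish ν s := by
  obtain ⟨C, hC⟩ := hν.1
  obtain ⟨f, hf, hff₀, hfν⟩ := exists_injective_sum_offDiag_le (J := List Bool × Bool)
    (a := fun k j => |ν k j|) (δ := 1 / 4) (by norm_num) hC hf₀
  refine ⟨_, fun x => ?_, fun x y hxy => ?_, rowsDistinguish_extend_branchSigns hν hf hfν⟩
  · exact support_extend_zero_subset.trans ((image_subset_range _ _).trans hff₀)
  · simp only [support_extend_zero hf, ← image_inter hf]
    exact (finite_support_branchSigns_inter hxy).image f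

end Distinguish

section Approximation

variable {J K X : Type*}

/-- The sequence `v` is at supremum distance less than `1/4` from some member of `W`. The bound on
the distance is rational so that there are only countably many approximations to consider when `W`
is countable. -/
def IsApprox (W : Submodule ℚ (K → ℝ)) (v : K → ℝ) : Prop :=
  ∃ ρ : ℚ, ρ < 1 / 4 ∧ ∃ w ∈ W, ∀ k, |v k - w k| ≤ ρ

lemma IsApprox.mono {W W' : Submodule ℚ (K → ℝ)} (h : W ≤ W') {v : K → ℝ} (hv : IsApprox W v) :
    IsApprox W' v := by
  obtain ⟨ρ, hρ, w, hw, hvw⟩ := hv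
  exact ⟨ρ, hρ, w, h hw, hvw⟩

lemma countable_setOf_isApprox_span_insert {V : Set (K → ℝ)} (hV : V.Countable)
    {v p : X → K → ℝ}
    (h : ∀ w ∈ Submodule.span ℚ V, ∀ r ρ : ℚ, ρ < 1 / 4 →
      {x | ∀ k, |v x k - (w k + r * p x k)| ≤ ρ}.Countable) :
    {x | IsApprox (Submodule.span ℚ (insert (p x) V)) (v x)}.Countable := by
  have hspan : (Submodule.span ℚ V : Set (K → ℝ)).Countable := by
    have := hV.to_subtype
    have hcount : Countable (Submodule.span ℚ (range ((↑) : V → K → ℝ))) := inferInstance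
    rwa [Subtype.range_coe] at hcount
  refine (hspan.biUnion fun w hw => countable_iUnion fun r : ℚ =>
    (to_countable {ρ : ℚ | ρ < 1 / 4}).biUnion fun ρ hρ => h w hw r ρ hρ).mono ?_
  rintro x ⟨ρ, hρ, w, hw, hvw⟩
  obtain ⟨r, w', hw', rfl⟩ := Submodule.mem_span_insert.1 hw
  simp only [mem_iUnion]
  refine ⟨w', hw', r, ρ, hρ, fun k => ?_⟩
  simpa only [Pi.add_apply, Pi.smul_apply, Rat.smul_def, add_comm] using hvw k

lemma false_of_abs_approx {a b w r ρ : ℝ} (ha : 3 / 4 ≤ |a|) (hb : |b| ≤ 1 / 4) (hra : r * a ≤ 0)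
    (hρ : ρ < 1 / 4) (haw : |(|a| - (w + r * a))| ≤ ρ) (hbw : |(|b| - (w + r * b))| ≤ ρ) :
    False := by
  have hra' : r * a = -(|r| * |a|) := by rw [← abs_mul, abs_of_nonpos hra, neg_neg]
  have hrb : -(|r| * |b|) ≤ r * b := by rw [← abs_mul]; exact neg_abs_le _
  nlinarith [abs_le.1 haw, abs_le.1 hbw, abs_nonneg r, mul_le_mul_of_nonneg_left ha (abs_nonneg r),
    mul_le_mul_of_nonneg_left hb (abs_nonneg r)]

lemma RowsDistinguish.subsingleton_setOf_abs_approx {ν : K → J → ℝ} {s : X → J → SignType}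
    (hs : RowsDistinguish ν s) (w : K → ℝ) (r : ℝ) {ρ : ℝ} (hρ : ρ < 1 / 4) :
    {x | ∀ k, |(|pairing ν (s x) k| - (w k + r * pairing ν (s x) k))| ≤ ρ}.Subsingleton := by
  intro x hx y hy
  by_contra hxy
  obtain ⟨⟨k, hkx, hky⟩, l, hlx, hly⟩ := hs hxy
  rcases le_total 0 r with hr | hr
  · exact false_of_abs_approx (le_abs.2 (.inr (by linarith))) hly
      (mul_nonpos_of_nonneg_of_nonpos hr (by linarith)) hρ (hx l) (hy l)
  · exact false_of_abs_approx (le_abs.2 (.inl hkx)) hky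
      (mul_nonpos_of_nonpos_of_nonneg hr (by linarith)) hρ (hx k) (hy k)

lemma exists_mem_abs_sum_pairing_sub_le {ν : K → J → ℝ} {C : ℝ}
    (hC : ∀ k, ∀ F : Finset J, ∑ j ∈ F, |ν k j| ≤ C) {s : X → J → SignType}
    (hs : Pairwise fun x y => (support (s x) ∩ support (s y)).Finite) {W : Submodule ℚ (K → ℝ)}
    (hW : ∀ j, (fun k => ν k j) ∈ W) (t : Finset X) :
    ∃ w ∈ W, ∀ k, |∑ x ∈ t, pairing ν (s x) k - w k| ≤ C := by
  classical
  have hfin : (⋃ p ∈ t.offDiag, support (s p.1) ∩ support (s p.2)).Finite :=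
    t.offDiag.finite_toSet.biUnion fun p hp => hs (Finset.mem_offDiag.1 hp).2.2
  have hcast : ∀ j, ((∑ x ∈ t, (s x j : ℚ) : ℚ) : ℝ) = ∑ x ∈ t, (s x j : ℝ) := fun j => by
    rw [Rat.cast_sum]
    exact Finset.sum_congr rfl fun x _ => by cases s x j <;> simp
  refine ⟨∑ j ∈ hfin.toFinset, (∑ x ∈ t, (s x j : ℚ)) • fun k => ν k j,
    W.sum_mem fun j _ => W.smul_mem _ (hW j), fun k => ?_⟩
  have hsum : ∀ x ∈ t, Summable fun j => ν k j * (s x j : ℝ) := fun x _ =>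
    summable_mul_of_sum_abs_le (hC k) fun j => abs_cast_signType_le_one _
  have hpair : ∑ x ∈ t, pairing ν (s x) k = ∑' j, ν k j * ∑ x ∈ t, (s x j : ℝ) := by
    simp only [pairing, Finset.mul_sum]
    exact (Summable.tsum_finsetSum hsum).symm
  simp only [hpair, Finset.sum_apply, Pi.smul_apply, Rat.smul_def, hcast, mul_comm _ (ν k _)]
  refine abs_tsum_mul_sub_sum_le ?_ (fun G _ => hC k G) fun j hj => ?_
  · simpa only [Finset.mul_sum] using summable_sum hsum
  · refine abs_sum_le_of_pairwise_mul_eq_zero zero_le_one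
      (fun x _ => abs_cast_signType_le_one _) fun x hx y hy hxy => ?_
    by_contra hne
    obtain ⟨hxj, hyj⟩ := mul_ne_zero_iff.1 hne
    refine hj (hfin.mem_toFinset.2 (mem_iUnion₂.2 ⟨(x, y), Finset.mem_offDiag.2 ⟨hx, hy, hxy⟩, ?_⟩))
    exact ⟨fun h => hxj (by simp [h]), fun h => hyj (by simp [h])⟩

-- The average of many almost disjoint sequences of signs is close to a finite combination of unit
-- vectors, so its pairing with `ν` is close to a combination of columns.
lemma isApprox_of_infinite {ν : K → J → ℝ} {C : ℝ}
    (hC : ∀ k, ∀ F : Finset J, ∑ j ∈ F, |ν k j| ≤ C) {s : X → J → SignType}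
    (hs : Pairwise fun x y => (support (s x) ∩ support (s y)).Finite) {W : Submodule ℚ (K → ℝ)}
    (hW : ∀ j, (fun k => ν k j) ∈ W) {w v : K → ℝ} (hw : w ∈ W) {r ρ : ℚ} (hρ : ρ < 1 / 4)
    (hinf : {x | ∀ k, |v k - (w k + r * pairing ν (s x) k)| ≤ ρ}.Infinite) : IsApprox W v := by
  obtain ⟨ρ', hρρ', hρ'⟩ := exists_between hρ
  have hpos : (0 : ℝ) < ρ' - ρ := sub_pos.2 (by exact_mod_cast hρρ')
  obtain ⟨n, hn⟩ := exists_nat_gt (|(r : ℝ)| * C / (ρ' - ρ))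
  obtain ⟨t, ht, htn⟩ := hinf.exists_subset_card_eq (n + 1)
  obtain ⟨w', hw', hle⟩ := exists_mem_abs_sum_pairing_sub_le hC hs hW t
  refine ⟨ρ', hρ', w + (r / (n + 1) : ℚ) • w', W.add_mem hw (W.smul_mem _ hw'), fun k => ?_⟩
  have hn0 : (0 : ℝ) < n + 1 := by positivity
  have hsum : |∑ x ∈ t, (v k - (w k + r * pairing ν (s x) k))| ≤ (n + 1) * ρ := by
    refine (Finset.abs_sum_le_sum_abs _ _).trans
      ((Finset.sum_le_sum fun x hx => ht hx k).trans_eq ?_)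
    rw [Finset.sum_const, htn, nsmul_eq_mul, Nat.cast_succ]
  have hsplit : (n + 1) * (v k - (w + (r / (n + 1) : ℚ) • w') k) =
      ∑ x ∈ t, (v k - (w k + r * pairing ν (s x) k)) +
        r * (∑ x ∈ t, pairing ν (s x) k - w' k) := by
    simp only [← sub_sub, Finset.sum_sub_distrib, ← Finset.mul_sum, Finset.sum_const, htn,
      nsmul_eq_mul, Pi.add_apply, Pi.smul_apply, Rat.smul_def]
    push_cast
    field_simp
    ring
  refine le_of_mul_le_mul_left ?_ hn0
  calc (n + 1) * |v k - (w + (r / (n + 1) : ℚ) • w') k|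
      = |(n + 1) * (v k - (w + (r / (n + 1) : ℚ) • w') k)| := by rw [abs_mul, abs_of_pos hn0]
    _ ≤ (n + 1) * ρ + |(r : ℝ)| * C := by
      rw [hsplit]
      refine (abs_add_le _ _).trans (add_le_add hsum ?_)
      rw [abs_mul]
      exact mul_le_mul_of_nonneg_left (hle k) (abs_nonneg _)
    _ ≤ (n + 1) * ρ' := by
      rw [div_lt_iff₀ hpos] at hn
      linarith

lemma RowsDistinguish.countable_setOf_isApprox {ν : K → J → ℝ} {s : X → J → SignType}
    (hs : RowsDistinguish ν s) {V : Set (K → ℝ)} (hV : V.Countable) :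
    {x | IsApprox (Submodule.span ℚ (insert (pairing ν (s x)) V))
      fun k => |pairing ν (s x) k|}.Countable :=
  countable_setOf_isApprox_span_insert hV fun w _ r _ hρ =>
    (hs.subsingleton_setOf_abs_approx w r
      ((Rat.cast_lt.2 hρ).trans_eq (by norm_num))).countable

lemma countable_setOf_isApprox_of_not_isApprox {ν : K → J → ℝ} {C : ℝ}
    (hC : ∀ k, ∀ F : Finset J, ∑ j ∈ F, |ν k j| ≤ C) {s : X → J → SignType}
    (hs : Pairwise fun x y => (support (s x) ∩ support (s y)).Finite) {V : Set (K → ℝ)}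
    (hV : V.Countable) (hcol : ∀ j, (fun k => ν k j) ∈ V) {v : K → ℝ}
    (hv : ¬ IsApprox (Submodule.span ℚ V) v) :
    {x | IsApprox (Submodule.span ℚ (insert (pairing ν (s x)) V)) v}.Countable :=
  countable_setOf_isApprox_span_insert hV fun _ hw _ _ hρ => by_contra fun h =>
    hv (isApprox_of_infinite hC hs (fun j => Submodule.subset_span (hcol j)) hw hρ
      fun hfin => h hfin.countable)

end Approximation

/-! ### Choice by transfinite recursion -/

section Recursion

open Cardinal

universe u

variable {I X : Type u}

lemma mk_finset_lt {κ : Cardinal.{u}} (hκ : ℵ₀ < κ) (hX : #X < κ) : #(Finset X) < κ := by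
  classical
  exact (mk_le_of_surjective List.toFinset_surjective).trans_lt
    ((mk_list_le_max X).trans_lt (max_lt hκ hX))

lemma exists_forall_of_wellFoundedLT [LT I] [WellFoundedLT I] [Nonempty X]
    {Q : (I → X) → I → X → Prop}
    (hcongr : ∀ ⦃a b ζ x⦄, (∀ η < ζ, a η = b η) → Q a ζ x → Q b ζ x)
    (hQ : ∀ a ζ, ∃ x, Q a ζ x) : ∃ a, ∀ ζ, Q a ζ (a ζ) := by
  classical
  choose next hnext using hQ
  let a : I → X := (wellFounded_lt (α := I)).fix fun ζ ih =>
    next (fun η => if h : η < ζ then ih η h else Classical.arbitrary X) ζ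
  have ha : ∀ ζ, a ζ = next (fun η => if η < ζ then a η else Classical.arbitrary X) ζ :=
    fun ζ => (wellFounded_lt (α := I)).fix_eq _ ζ
  refine ⟨a, fun ζ => ?_⟩
  rw [ha]
  exact hcongr (fun η hη => if_pos hη) (hnext _ ζ)

lemma exists_forall_notMem_of_countable {Y : Type u} {κ : Cardinal.{u}} (hκ : ℵ₀ < κ)
    (hY : #Y < κ) (hX : κ ≤ #X) {bad : Y → Set X} (hbad : ∀ y, (bad y).Countable) :
    ∃ x, ∀ y, x ∉ bad y := by
  by_contra! h
  have hunion : #(⋃ y, bad y) < #X := calc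
    #(⋃ y, bad y) ≤ #Y * ⨆ y, #(bad y) := mk_iUnion_le _
    _ ≤ #Y * ℵ₀ := by gcongr; exact ciSup_le' fun y => le_aleph0_iff_set_countable.2 (hbad y)
    _ < #X := (mul_lt_of_lt hκ.le hY hκ).trans_le hX
  rw [eq_univ_of_forall fun x => mem_iUnion.2 (h x), mk_univ] at hunion
  exact hunion.false

-- At stage `ζ` there are fewer than `κ` finite sets of earlier indices, each excluding countably
-- many values, so some value is left.
lemma exists_forall_finset [LinearOrder I] [WellFoundedLT I] {κ : Cardinal.{u}} (hκ : ℵ₀ < κ)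
    (hI : ∀ ζ : I, #(Iio ζ) < κ) (hX : κ ≤ #X) {P : Finset I → (I → X) → Prop}
    (hcongr : ∀ ⦃F a b⦄, (∀ η ∈ F, a η = b η) → P F a → P F b) (hempty : ∀ a, P ∅ a)
    (hinsert : ∀ ⦃F ζ a⦄, (∀ η ∈ F, η < ζ) → P F a →
      {x | ¬ P (insert ζ F) (update a ζ x)}.Countable) :
    ∃ a, ∀ F, P F a := by
  have : Nonempty X := mk_ne_zero_iff.1 ((aleph0_pos.trans (hκ.trans_le hX)).ne')
  have hnext : ∀ (a : I → X) (ζ : I), ∃ x, ∀ F : Finset I, (∀ η ∈ F, η < ζ) → P F a →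
      P (insert ζ F) (update a ζ x) := fun a ζ => by
    obtain ⟨x, hx⟩ := exists_forall_notMem_of_countable hκ (mk_finset_lt hκ (hI ζ)) hX
      (bad := fun F : Finset (Iio ζ) => {x | P (F.map (.subtype _)) a ∧
        ¬ P (insert ζ (F.map (.subtype _))) (update a ζ x)}) fun F => by
      by_cases hP : P (F.map (.subtype _)) a
      · exact (hinsert (by simp +contextual) hP).mono fun x hx => hx.2
      · exact countable_empty.mono fun x hx => hP hx.1
    refine ⟨x, fun F hF hP => by_contra fun hPx => hx (F.subtype _) ?_⟩
    have hFF : (F.subtype (· ∈ Iio ζ)).map (.subtype _) = F := Finset.subtype_map_of_mem hF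
    exact ⟨hFF.symm ▸ hP, hFF.symm ▸ hPx⟩
  obtain ⟨a, ha⟩ := exists_forall_of_wellFoundedLT (fun a b ζ x hab hQ F hF hP => by
    refine hcongr (fun η hη => ?_) (hQ F hF (hcongr (fun η hη => (hab η (hF η hη)).symm) hP))
    rcases Finset.mem_insert.1 hη with rfl | hη
    · simp only [update_self]
    · rw [update_of_ne (hF η hη).ne, update_of_ne (hF η hη).ne, hab η (hF η hη)]) hnext
  refine ⟨a, fun F => ?_⟩
  induction F using Finset.induction_on_max with
  | empty => exact hempty a
  | insert ζ F hF ih => simpa only [update_eq_self] using ha ζ F hF ih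

end Recursion

section Choice

open Cardinal

universe u

variable {J K : Type*} {I X : Type u}

lemma exists_finset_mem_span_union_image {R M : Type*} [Semiring R] [AddCommMonoid M] [Module R M]
    {B : Set M} {p : I → M} {w : M} (hw : w ∈ Submodule.span R (B ∪ range p)) :
    ∃ F : Finset I, w ∈ Submodule.span R (B ∪ p '' F) := by
  classical
  obtain ⟨T, hT, hwT⟩ := Submodule.mem_span_finite_of_mem_span hw
  have hrange : ((T.filter (· ∉ B) : Finset M) : Set M) ⊆ p '' univ := fun t ht => by
    rw [image_univ]
    exact (hT (Finset.mem_filter.1 ht).1).resolve_left (Finset.mem_filter.1 ht).2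
  obtain ⟨F, -, hF⟩ := Finset.subset_set_image_iff.1 hrange
  refine ⟨F, Submodule.span_mono (fun t ht => ?_) hwT⟩
  by_cases htB : t ∈ B
  · exact .inl htB
  · refine .inr ?_
    rw [← Finset.coe_image, hF]
    exact Finset.mem_filter.2 ⟨ht, htB⟩

/-- No sequence `|pairing (ν ξ) (s ξ (a ξ))|` with `ξ` in the finite set `F` is approximated by the
rational span of `B ξ` and of the pairings of `ν ξ` with the members of the families `s η` that the
choice function `a` selects for `η` in `F`. -/
def NoneApprox (ν : I → K → J → ℝ) (s : I → X → J → SignType) (B : I → Set (K → ℝ)) (F : Finset I)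
    (a : I → X) : Prop :=
  ∀ ξ ∈ F, ¬ IsApprox (Submodule.span ℚ (B ξ ∪ (fun η => pairing (ν ξ) (s η (a η))) '' F))
    fun k => |pairing (ν ξ) (s ξ (a ξ)) k|

variable {ν : I → K → J → ℝ} {s : I → X → J → SignType} {B : I → Set (K → ℝ)}

lemma NoneApprox.congr {F : Finset I} {a b : I → X} (hab : ∀ η ∈ F, a η = b η)
    (ha : NoneApprox ν s B F a) : NoneApprox ν s B F b := fun ξ hξ => by
  have himage : (fun η => pairing (ν ξ) (s η (a η))) '' F =
      (fun η => pairing (ν ξ) (s η (b η))) '' F := image_congr fun η hη => by rw [hab η hη]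
  simpa only [himage, hab ξ hξ] using ha ξ hξ

lemma NoneApprox.countable_setOf_not_insert [DecidableEq I] {ζ : I} {F : Finset I} {a : I → X}
    (ha : NoneApprox ν s B F a) (hζ : ζ ∉ F)
    (hν : ∀ ξ, ∃ C, ∀ k, ∀ F : Finset J, ∑ j ∈ F, |ν ξ k j| ≤ C)
    (hs : Pairwise fun x y => (support (s ζ x) ∩ support (s ζ y)).Finite)
    (hdist : RowsDistinguish (ν ζ) (s ζ)) (hB : ∀ ξ, (B ξ).Countable)
    (hcol : ∀ ξ j, (fun k => ν ξ k j) ∈ B ξ) :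
    {x | ¬ NoneApprox ν s B (insert ζ F) (update a ζ x)}.Countable := by
  have hne : ∀ η ∈ F, η ≠ ζ := fun η hη => ne_of_mem_of_not_mem hη hζ
  let V (ξ : I) : Set (K → ℝ) := B ξ ∪ (fun η => pairing (ν ξ) (s η (a η))) '' F
  have hV : ∀ ξ, (V ξ).Countable := fun ξ => (hB ξ).union (F.countable_toSet.image _)
  have hinsert : ∀ ξ x, B ξ ∪ (fun η => pairing (ν ξ) (s η (update a ζ x η))) ''
      (insert ζ F : Finset I) = insert (pairing (ν ξ) (s ζ x)) (V ξ) := fun ξ x => by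
    simp only [V, Finset.coe_insert, image_insert_eq, union_insert, update_self]
    rw [image_congr fun η hη => by rw [update_of_ne (hne η hη)]]
  simp only [NoneApprox, not_forall, not_not, hinsert]
  refine ((insert ζ F).countable_toSet.biUnion (t := fun ξ _ => {x | IsApprox
    (Submodule.span ℚ (insert (pairing (ν ξ) (s ζ x)) (V ξ)))
    (fun k => |pairing (ν ξ) (s ξ (update a ζ x ξ)) k|)}) fun ξ hξ => ?_).mono
    fun x ⟨ξ, hξ, happ⟩ => mem_biUnion (Finset.mem_coe.2 hξ) happ
  rcases Finset.mem_insert.1 hξ with rfl | hξ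
  · simpa only [update_self] using hdist.countable_setOf_isApprox (hV ξ)
  · obtain ⟨C, hC⟩ := hν ξ
    simpa only [update_of_ne (hne ξ hξ)] using countable_setOf_isApprox_of_not_isApprox hC hs
      (hV ξ) (fun j => .inl (hcol ξ j)) (ha ξ hξ)

lemma exists_choice_not_isApprox [LinearOrder I] [WellFoundedLT I] {κ : Cardinal.{u}}
    (hκ : ℵ₀ < κ) (hI : ∀ ζ : I, #(Iio ζ) < κ) (hX : κ ≤ #X)
    (hν : ∀ ξ, ∃ C, ∀ k, ∀ F : Finset J, ∑ j ∈ F, |ν ξ k j| ≤ C)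
    (hs : ∀ ζ, Pairwise fun x y => (support (s ζ x) ∩ support (s ζ y)).Finite)
    (hdist : ∀ ζ, RowsDistinguish (ν ζ) (s ζ)) (hB : ∀ ξ, (B ξ).Countable)
    (hcol : ∀ ξ j, (fun k => ν ξ k j) ∈ B ξ) :
    ∃ a : I → X, ∀ ξ, ¬ IsApprox
      (Submodule.span ℚ (B ξ ∪ range fun η => pairing (ν ξ) (s η (a η))))
      fun k => |pairing (ν ξ) (s ξ (a ξ)) k| := by
  obtain ⟨a, ha⟩ := exists_forall_finset hκ hI hX (P := NoneApprox ν s B)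
    (fun _ _ _ hab ha => ha.congr hab) (fun a ξ hξ => absurd hξ (Finset.notMem_empty ξ))
    fun F ζ a hF ha => ha.countable_setOf_not_insert (fun hζ => (hF ζ hζ).false) hν (hs ζ)
      (hdist ζ) hB hcol
  refine ⟨a, fun ξ ⟨ρ, hρ, w, hw, hvw⟩ => ?_⟩
  obtain ⟨F, hwF⟩ := exists_finset_mem_span_union_image hw
  refine ha (insert ξ F) ξ (Finset.mem_insert_self ξ F) ⟨ρ, hρ, w, Submodule.span_mono ?_ hwF, hvw⟩
  exact union_subset_union_right _ (image_mono (Finset.coe_subset.2 (Finset.subset_insert _ _)))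

end Choice

/-- An almost disjoint family of subsets of `ℕ`, each with a choice of signs for its elements: the
member `ξ` is the support of `sgn ξ`. -/
structure SignedFamily (I : Type*) where
  sgn : I → ℕ → SignType
  finite_inter : Pairwise fun ξ η => (support (sgn ξ) ∩ support (sgn η)).Finite

lemma hasLargeDiagonal_single {J : Type*} [DecidableEq J] :
    HasLargeDiagonal fun k : J => Pi.single k (1 : ℝ) := by
  refine ⟨⟨1, fun k F => ?_⟩, fun k => by simp⟩
  simp only [Pi.single_apply, apply_ite abs, abs_one, abs_zero, Finset.sum_ite_eq']
  split_ifs <;> norm_num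

open Cardinal in
lemma mk_hasLargeDiagonal_prod :
    #(({ν : ℕ → ℕ → ℝ // HasLargeDiagonal ν} × (ℕ → ℕ → ℝ)) × ℝ) = 𝔠 := by
  have hmatrix : #(ℕ → ℕ → ℝ) = 𝔠 := by simp [mk_real]
  refine le_antisymm ?_ ?_
  · rw [mk_prod, mk_prod, lift_id, lift_id, lift_id, lift_id, hmatrix, mk_real]
    calc #{ν : ℕ → ℕ → ℝ // HasLargeDiagonal ν} * 𝔠 * 𝔠 ≤ 𝔠 * 𝔠 * 𝔠 := by
          gcongr
          exact (mk_subtype_le _).trans_eq hmatrix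
      _ = 𝔠 := by rw [continuum_mul_self, continuum_mul_self]
  · rw [← mk_real]
    exact mk_le_of_injective (Prod.mk_right_injective ((⟨_, hasLargeDiagonal_single⟩, 0)))

namespace SignedFamily

/-- For every matrix `ν` with large diagonal and every countable set `A` of sequences, uncountably
many sequences `|pairing ν (g.sgn ξ)|` are far from the rational span of `A` and of the pairings of
`ν` with all members of the family. -/
def IsAbsIndependent {I : Type*} (g : SignedFamily I) : Prop :=
  ∀ ⦃ν : ℕ → ℕ → ℝ⦄, HasLargeDiagonal ν → ∀ ⦃A : Set (ℕ → ℝ)⦄, A.Countable →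
    ¬ {ξ | ¬ IsApprox (Submodule.span ℚ (A ∪ range fun η => pairing ν (g.sgn η)))
      fun k => |pairing ν (g.sgn ξ) k|}.Countable

open Cardinal

-- The index set is well ordered in type `𝔠` and each pair `(ν, A)` is attached to uncountably many
-- indices. The member with index `ξ` lives on its own branch of the binary tree and is chosen, by
-- transfinite recursion, so as to spoil the approximation for the pair attached to `ξ`.
theorem exists_isAbsIndependent :
    ∃ (I : Type) (g : SignedFamily I), #I = 𝔠 ∧ g.IsAbsIndependent := by
  let I : Type := (𝔠 : Cardinal.{0}).ord.ToType
  have hI : #I = 𝔠 := mk_ord_toType _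
  obtain ⟨e⟩ : Nonempty (I ≃ (ℕ → Bool)) := Cardinal.eq.1 (by simp [hI])
  obtain ⟨d⟩ := Cardinal.eq.1 (hI.trans mk_hasLargeDiagonal_prod.symm)
  choose s hsupp hs hdist using fun ζ : I => exists_rowsDistinguish (d ζ).1.1.2
    (f₀ := Encodable.encode ∘ PiNat.res (e ζ)) (Encodable.encode_injective.comp (injective_res _))
  obtain ⟨a, ha⟩ := exists_choice_not_isApprox (B := fun ξ => range (d ξ).1.2 ∪
      range fun j k => (d ξ).1.1.1 k j) aleph0_lt_continuum
    (fun ζ => (mk_Iio_lt ζ (by simp [I])).trans_eq hI) (by simp) (fun ξ => (d ξ).1.1.2.1) hs hdist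
    (fun ξ => (countable_range _).union (countable_range _)) fun ξ j => .inr ⟨j, rfl⟩
  refine ⟨I, ⟨fun ζ => s ζ (a ζ), fun ξ η hξη => ?_⟩, hI, fun ν hν A hA hcount => ?_⟩
  · refine ((finite_range_res_inter (e.injective.ne hξη)).image Encodable.encode).subset ?_
    rw [image_inter Encodable.encode_injective, ← range_comp, ← range_comp]
    exact inter_subset_inter (hsupp _ _) (hsupp _ _)
  · obtain ⟨c, hc⟩ := countable_iff_exists_subset_range.1 hA
    refine not_countable_univ ((hcount.preimage (f := fun t : ℝ => d.symm ((⟨ν, hν⟩, c), t))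
      fun t u h => by simpa using h).mono fun t _ => ?_)
    have hξ := ha (d.symm ((⟨ν, hν⟩, c), t))
    simp only [Equiv.apply_symm_apply] at hξ
    exact fun happ => hξ (happ.mono (Submodule.span_mono (union_subset_union_left _
      (hc.trans subset_union_left))))

end SignedFamily

/-! ### Odd functions and spaces of null sequences -/

section OddFunctions

variable (L : Type*) [TopologicalSpace L] [InvolutiveNeg L]

/-- The odd continuous functions on a space with an involution, the involution being written as
negation. -/
def oddFunctions : Submodule ℝ C(L, ℝ) where
  carrier := {f | Function.Odd f}
  add_mem' := Function.Odd.add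
  zero_mem' := Function.Odd.zero
  smul_mem' r _ hf := hf.const_smul r

lemma isClosed_oddFunctions : IsClosed (oddFunctions L : Set C(L, ℝ)) := by
  change IsClosed {f : C(L, ℝ) | ∀ x, f (-x) = -f x}
  simp only [ofPred_forall]
  exact isClosed_iInter fun x => isClosed_eq (by fun_prop) (by fun_prop)

instance [CompactSpace L] : CompleteSpace (oddFunctions L) :=
  (isClosed_oddFunctions L).completeSpace_coe

variable [ContinuousNeg L]

/-- The odd part `x ↦ (f x - f (-x)) / 2` of a continuous function `f`, as a continuous linear
map. -/
noncomputable def oddPart : C(L, ℝ) →L[ℝ] C(L, ℝ) where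
  toFun f := (2⁻¹ : ℝ) • (f - f.comp ⟨Neg.neg, continuous_neg⟩)
  map_add' f h := by ext x; simp; ring
  map_smul' r f := by ext x; simp; ring
  cont := by fun_prop

variable {L}

@[simp]
lemma oddPart_apply (f : C(L, ℝ)) (x : L) : oddPart L f x = 2⁻¹ * (f x - f (-x)) := rfl

lemma oddPart_mem_oddFunctions (f : C(L, ℝ)) : oddPart L f ∈ oddFunctions L := fun x => by
  simp only [oddPart_apply, neg_neg]
  ring

lemma oddPart_eq_self {f : C(L, ℝ)} (hf : f ∈ oddFunctions L) : oddPart L f = f := by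
  ext x
  rw [oddPart_apply, hf.eq]
  ring

lemma range_oddPart : range (oddPart L) = oddFunctions L :=
  Subset.antisymm (range_subset_iff.2 oddPart_mem_oddFunctions) fun f hf => ⟨f, oddPart_eq_self hf⟩

lemma norm_oddPart [CompactSpace L] [Nontrivial (oddFunctions L)] : ‖oddPart L‖ = 1 := by
  refine le_antisymm (ContinuousLinearMap.opNorm_le_bound _ zero_le_one fun f => ?_) ?_
  · refine (ContinuousMap.norm_le _ (by positivity)).2 fun x => ?_
    have hx := abs_le.1 (f.norm_coe_le_norm x)
    have hneg := abs_le.1 (f.norm_coe_le_norm (-x))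
    rw [oddPart_apply, Real.norm_eq_abs, abs_le]
    constructor <;> linarith
  · obtain ⟨f, hf⟩ := exists_ne (0 : oddFunctions L)
    have h := (oddPart L).ratio_le_opNorm f.1
    rwa [oddPart_eq_self f.2, div_self (norm_ne_zero_iff.2 (by simpa using hf))] at h

end OddFunctions

section ZeroAtInfty

variable {E L J : Type*} [NormedAddCommGroup E] [NormedSpace ℝ E] [TopologicalSpace L]
  [CompactSpace L] [TopologicalSpace J] [DiscreteTopology J]

/-- An operator into `C(L, ℝ)` whose values, restricted to a family of points, tend to zero, seen as
an operator into `c₀` of the index set. -/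
noncomputable def restrictPoints (T : E →L[ℝ] C(L, ℝ)) (p : J → L)
    (hp : ∀ z, Filter.Tendsto (fun j => T z (p j)) Filter.cofinite (nhds 0)) : E →L[ℝ] C₀(J, ℝ) :=
  LinearMap.mkContinuous
    { toFun z := ⟨⟨fun j => T z (p j), continuous_of_discreteTopology⟩, by
        rw [Filter.cocompact_eq_cofinite]; exact hp z⟩
      map_add' y z := by ext; simp
      map_smul' r z := by ext; simp } ‖T‖ fun z => by
    rw [← ZeroAtInftyContinuousMap.norm_toBCF_eq_norm]
    exact (BoundedContinuousFunction.norm_le (by positivity)).2 fun j =>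
      ((T z).norm_coe_le_norm (p j)).trans (T.le_opNorm z)

lemma nonempty_equiv_zeroAtInfty_of_restrictPoints [CompleteSpace E] (T : E →L[ℝ] C(L, ℝ))
    (p : J → L) (hp : ∀ z, Filter.Tendsto (fun j => T z (p j)) Filter.cofinite (nhds 0))
    (hinj : ∀ z, (∀ j, T z (p j) = 0) → z = 0) (hsurj : ∀ c : C₀(J, ℝ), ∃ z, ∀ j, T z (p j) = c j) :
    Nonempty (E ≃L[ℝ] C₀(J, ℝ)) :=
  ⟨.ofBijective (restrictPoints T p hp)
    (LinearMap.ker_eq_bot'.2 fun z hz => hinj z fun j => congr($hz j))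
    (LinearMap.range_eq_top.2 fun c => (hsurj c).imp fun _ hz => ZeroAtInftyContinuousMap.ext hz)⟩

/-- The first isomorphism theorem for a surjective operator between Banach spaces. -/
noncomputable def quotientKerEquivOfSurjective [CompleteSpace E] {F : Type*} [NormedAddCommGroup F]
    [NormedSpace ℝ F] [CompleteSpace F] (T : E →L[ℝ] F) (hT : Surjective T) :
    (E ⧸ T.ker) ≃L[ℝ] F :=
  haveI : IsClosed (T.ker : Set E) := T.isClosed_ker
  (T.toLinearMap.quotKerEquivOfSurjective hT).toContinuousLinearEquivOfContinuous
    (T.ker.liftQL T le_rfl).continuous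

end ZeroAtInfty

/-! ### The compact space of a signed family -/

lemma isClosed_of_forall_exists_finite_inter {X : Type*} [TopologicalSpace X] [T1Space X]
    {A : Set X} (h : ∀ x ∉ A, ∃ U, IsOpen U ∧ x ∈ U ∧ (U ∩ A).Finite) : IsClosed A := by
  refine isClosed_of_closure_subset fun x hx => ?_
  by_contra hxA
  obtain ⟨U, hU, hxU, hfin⟩ := h x hxA
  exact hxA (hfin.isClosed.closure_subset (hU.inter_closure ⟨hxU, hx⟩)).2

namespace SignedFamily

variable {I : Type*} (g : SignedFamily I)

open Classical in
/-- A point of the cube `{-1, 0, 1}^(ℕ ⊕ I)` for each index. The point indexed by `n : ℕ` is the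
`n`th unit vector on `ℕ`, continued to `I` by the `n`th entries of the members of `g`; the point
indexed by `ξ : I` is a unit vector. -/
noncomputable def signs : ℕ ⊕ I → ℕ ⊕ I → SignType
  | .inl n => Sum.elim (Pi.single n 1) fun ξ => g.sgn ξ n
  | .inr ξ => Sum.elim 0 (Pi.single ξ 1)

@[simp]
lemma signs_self (j : ℕ ⊕ I) : g.signs j j = 1 := by
  cases j <;> simp [signs]

lemma signs_inl_of_ne {j : ℕ ⊕ I} {n : ℕ} (h : j ≠ .inl n) : g.signs j (.inl n) = 0 := by
  rcases j with m | ξ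
  · exact Pi.single_eq_of_ne (fun hnm => h (congrArg _ hnm.symm)) _
  · rfl

@[simp]
lemma signs_inl_inr (n : ℕ) (ξ : I) : g.signs (.inl n) (.inr ξ) = g.sgn ξ n := rfl

@[simp]
lemma signs_inr_inl (ξ : I) (n : ℕ) : g.signs (.inr ξ) (.inl n) = 0 := rfl

lemma signs_inr_inr_of_ne {ξ η : I} (h : ξ ≠ η) : g.signs (.inr ξ) (.inr η) = 0 := by
  classical exact Pi.single_eq_of_ne h.symm _

/-- The symmetric set consisting of `0` and of all `± g.signs j`. -/
def carrier : Set (ℕ ⊕ I → SignType) := {x | x = 0 ∨ ∃ j, x = g.signs j ∨ x = -g.signs j}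

lemma exists_of_mem_carrier_of_ne_zero {x : ℕ ⊕ I → SignType} (hx : x ∈ g.carrier) {i : ℕ ⊕ I}
    (hi : x i ≠ 0) : ∃ j, (x = g.signs j ∨ x = -g.signs j) ∧ ∀ i, x i ≠ 0 → g.signs j i ≠ 0 := by
  obtain rfl | ⟨j, hj⟩ := hx
  · exact absurd rfl hi
  · refine ⟨j, hj, fun i => ?_⟩
    rcases hj with rfl | rfl <;> simp

lemma finite_carrier_inter_inl (n : ℕ) : ({x | x (.inl n) ≠ 0} ∩ g.carrier).Finite := by
  refine (toFinite {g.signs (.inl n), -g.signs (.inl n)}).subset fun x ⟨hn, hx⟩ => ?_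
  obtain ⟨j, hxj, hj⟩ := g.exists_of_mem_carrier_of_ne_zero hx hn
  obtain rfl : j = .inl n := by
    by_contra h
    exact hj _ hn (g.signs_inl_of_ne h)
  exact hxj

lemma finite_carrier_inter_inr {ξ η : I} (h : ξ ≠ η) :
    ({x | x (.inr ξ) ≠ 0 ∧ x (.inr η) ≠ 0} ∩ g.carrier).Finite := by
  refine ((g.finite_inter h).biUnion fun n _ =>
    toFinite {g.signs (.inl n), -g.signs (.inl n)}).subset fun x ⟨⟨hξ, hη⟩, hx⟩ => ?_
  obtain ⟨n | ζ, hxj, hj⟩ := g.exists_of_mem_carrier_of_ne_zero hx hξ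
  · exact mem_biUnion ⟨hj _ hξ, hj _ hη⟩ hxj
  · have hζ : ∀ θ, x (.inr θ) ≠ 0 → ζ = θ := fun θ hθ => by
      by_contra hne
      exact hj _ hθ (g.signs_inr_inr_of_ne hne)
    exact absurd ((hζ ξ hξ).symm.trans (hζ η hη)) h

lemma mem_carrier_of_forall_eq_zero {x : ℕ ⊕ I → SignType} {ξ : I} (hn : ∀ n, x (.inl n) = 0)
    (hξ : ∀ η, ξ ≠ η → x (.inr η) = 0) : x ∈ g.carrier := by
  have hx : ∀ s : SignType, x (.inr ξ) = s → x = fun j => s * g.signs (.inr ξ) j := by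
    rintro s rfl
    funext j
    rcases j with n | η
    · simp [hn]
    · rcases eq_or_ne ξ η with rfl | hne
      · simp
      · simp [hξ η hne, g.signs_inr_inr_of_ne hne]
  rcases h : x (.inr ξ) with _ | _ | _
  · exact .inl ((hx _ h).trans (by ext; simp))
  · exact .inr ⟨.inr ξ, .inr ((hx _ h).trans (by ext; simp))⟩
  · exact .inr ⟨.inr ξ, .inl ((hx _ h).trans (by ext; simp))⟩

lemma isClosed_carrier : IsClosed g.carrier := by
  have hopen : ∀ j, IsOpen {x : ℕ ⊕ I → SignType | x j ≠ 0} := fun j =>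
    isOpen_ne_fun (continuous_apply j) continuous_const
  refine isClosed_of_forall_exists_finite_inter fun x hx => ?_
  by_cases hn : ∃ n, x (.inl n) ≠ 0
  · obtain ⟨n, hn⟩ := hn
    exact ⟨_, hopen _, hn, g.finite_carrier_inter_inl n⟩
  push Not at hn
  obtain ⟨ξ, hξ⟩ : ∃ ξ, x (.inr ξ) ≠ 0 := by
    by_contra! h
    exact hx (.inl (funext fun j => j.rec hn h))
  obtain ⟨η, hξη, hη⟩ : ∃ η, ξ ≠ η ∧ x (.inr η) ≠ 0 := by
    by_contra! h
    exact hx (g.mem_carrier_of_forall_eq_zero hn h)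
  exact ⟨_, (hopen _).inter (hopen _), ⟨hξ, hη⟩, g.finite_carrier_inter_inr hξη⟩

/-- The compact space of a signed family. -/
abbrev Space : Type _ := g.carrier

instance : CompactSpace g.Space := isCompact_iff_compactSpace.1 g.isClosed_carrier.isCompact

instance : InvolutiveNeg g.Space where
  neg x := ⟨-x.1, by
    obtain ⟨x, rfl | ⟨j, rfl | rfl⟩⟩ := x
    exacts [.inl neg_zero, .inr ⟨j, .inr rfl⟩, .inr ⟨j, .inl (neg_neg _)⟩]⟩
  neg_neg x := Subtype.ext (neg_neg x.1)

instance : ContinuousNeg g.Space where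
  continuous_neg := continuous_subtype_val.neg.subtype_mk _

instance : NegZeroClass g.Space where
  zero := ⟨0, .inl rfl⟩
  neg_zero := Subtype.ext neg_zero

@[simp] lemma coe_neg (x : g.Space) : (↑(-x) : ℕ ⊕ I → SignType) = -x := rfl

@[simp] lemma coe_zero : ((0 : g.Space) : ℕ ⊕ I → SignType) = 0 := rfl

/-- The point `g.signs j` of the space of `g`. -/
noncomputable def point (j : ℕ ⊕ I) : g.Space := ⟨g.signs j, .inr ⟨j, .inl rfl⟩⟩

@[simp] lemma coe_point (j : ℕ ⊕ I) : (g.point j : ℕ ⊕ I → SignType) = g.signs j := rfl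

lemma eq_zero_or_exists_eq_point (x : g.Space) : x = 0 ∨ ∃ j, x = g.point j ∨ x = -g.point j := by
  obtain ⟨x, rfl | ⟨j, rfl | rfl⟩⟩ := x
  exacts [.inl rfl, .inr ⟨j, .inl rfl⟩, .inr ⟨j, .inr rfl⟩]

lemma tendsto_point_inr :
    Filter.Tendsto (fun ξ => g.point (.inr ξ)) Filter.cofinite (nhds 0) := by
  rw [tendsto_subtype_rng, tendsto_pi_nhds]
  rintro (_ | η)
  · exact tendsto_const_nhds
  · refine tendsto_const_nhds.congr' ?_
    filter_upwards [(finite_singleton η).compl_mem_cofinite] with ξ hξ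
    exact (g.signs_inr_inr_of_ne hξ).symm

end SignedFamily

namespace SignedFamily

section Odd

variable {I : Type*} {g : SignedFamily I}

lemma abs_apply_le_of_forall_point {z : oddFunctions g.Space} {r : ℝ}
    (h : ∀ j, |z.1 (g.point j)| ≤ r) (x : g.Space) : |z.1 x| ≤ r := by
  rcases g.eq_zero_or_exists_eq_point x with rfl | ⟨j, rfl | rfl⟩
  · rw [z.2.map_zero, abs_zero]
    exact (abs_nonneg _).trans (h (.inl 0))
  · exact h j
  · rw [z.2.eq, abs_neg]
    exact h j

lemma norm_le_of_forall_point {z : oddFunctions g.Space} {r : ℝ}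
    (h : ∀ j, |z.1 (g.point j)| ≤ r) : ‖z‖ ≤ r :=
  (ContinuousMap.norm_le _ ((abs_nonneg _).trans (h (.inl 0)))).2 (abs_apply_le_of_forall_point h)

lemma mul_eq_zero_of_forall_point {y z : oddFunctions g.Space}
    (h : ∀ j, y.1 (g.point j) = 0 ∨ z.1 (g.point j) = 0) : y.1 * z.1 = 0 := by
  ext x
  rw [ContinuousMap.mul_apply, ContinuousMap.zero_apply, mul_eq_zero]
  rcases g.eq_zero_or_exists_eq_point x with rfl | ⟨j, rfl | rfl⟩
  · exact .inl y.2.map_zero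
  · exact h j
  · rw [y.2.eq, z.2.eq, neg_eq_zero, neg_eq_zero]
    exact h j

lemma tendsto_apply_point_inr (z : oddFunctions g.Space) :
    Filter.Tendsto (fun ξ => z.1 (g.point (.inr ξ))) Filter.cofinite (nhds 0) :=
  (z.2.map_zero ▸ z.1.continuous.tendsto 0).comp g.tendsto_point_inr

lemma finite_setOf_le_abs_point_inl {z : oddFunctions g.Space} {ε : ℝ} (hε : 0 < ε)
    (hz : ∀ ξ, |z.1 (g.point (.inr ξ))| < ε) : {n : ℕ | ε ≤ |z.1 (g.point (.inl n))|}.Finite := by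
  have hK : IsCompact {x | ε ≤ |z.1 x|} := (isClosed_le (by fun_prop) (by fun_prop)).isCompact
  have hcover : {x | ε ≤ |z.1 x|} ⊆ ⋃ n, {x : g.Space | x.1 (.inl n) ≠ 0} := by
    intro x (hx : ε ≤ |z.1 x|)
    rcases g.eq_zero_or_exists_eq_point x with rfl | ⟨n | ξ, rfl | rfl⟩
    · rw [z.2.map_zero, abs_zero] at hx
      exact absurd hx hε.not_ge
    · exact mem_iUnion.2 ⟨n, by simp⟩
    · exact mem_iUnion.2 ⟨n, by simp⟩
    · exact absurd hx (hz ξ).not_ge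
    · rw [z.2.eq, abs_neg] at hx
      exact absurd hx (hz ξ).not_ge
  obtain ⟨t, ht⟩ := hK.elim_finite_subcover _ (fun n => isOpen_ne_fun
    ((continuous_apply _).comp continuous_subtype_val) continuous_const) hcover
  refine t.finite_toSet.subset fun n hn => ?_
  obtain ⟨m, hm, hmn⟩ := mem_iUnion₂.1 (ht hn)
  obtain rfl : n = m := by
    by_contra h
    exact hmn (g.signs_inl_of_ne (j := .inl n) (Sum.inl_injective.ne h))
  exact hm

lemma tendsto_apply_point_inl {z : oddFunctions g.Space}
    (hz : ∀ ξ, z.1 (g.point (.inr ξ)) = 0) :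
    Filter.Tendsto (fun n => z.1 (g.point (.inl n))) Filter.cofinite (nhds 0) :=
  Metric.tendsto_nhds.2 fun ε hε => by
    have hzε : ∀ ξ, |z.1 (g.point (.inr ξ))| < ε := fun ξ => by rwa [hz, abs_zero]
    simpa [Filter.eventually_cofinite] using finite_setOf_le_abs_point_inl hε hzε

end Odd

section Coord

variable {I : Type*} (g : SignedFamily I)

/-- The coordinate functions on the space of `g`. -/
def coord (j : ℕ ⊕ I) : oddFunctions g.Space :=
  ⟨⟨fun x => (x.1 j : ℝ), (continuous_of_discreteTopology (f := ((↑) : SignType → ℝ))).comp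
    ((continuous_apply j).comp continuous_subtype_val)⟩, fun x => by simp⟩

@[simp] lemma coord_apply (j : ℕ ⊕ I) (x : g.Space) : (g.coord j).1 x = x.1 j := rfl

lemma norm_coord_le (j : ℕ ⊕ I) : ‖g.coord j‖ ≤ 1 :=
  norm_le_of_forall_point fun _ => abs_cast_signType_le_one _

lemma one_le_norm_coord (j : ℕ ⊕ I) : 1 ≤ ‖g.coord j‖ := by
  simpa using (g.coord j).1.norm_coe_le_norm (g.point j)

instance : Nontrivial (oddFunctions g.Space) :=
  ⟨g.coord (.inl 0), 0, norm_ne_zero_iff.1 (zero_lt_one.trans_le (g.one_le_norm_coord _)).ne'⟩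

lemma pairwise_coord_inl_mul : Pairwise fun m n : ℕ =>
    (g.coord (.inl m)).1 * (g.coord (.inl n)).1 = 0 := fun m n hmn =>
  mul_eq_zero_of_forall_point fun j => by
    by_contra! h
    have hj : ∀ k, (g.coord (.inl k)).1 (g.point j) ≠ 0 → j = .inl k := fun k hk => by
      by_contra hjk
      exact hk (by simp [g.signs_inl_of_ne hjk])
    exact hmn (Sum.inl_injective ((hj m h.1).symm.trans (hj n h.2)))

lemma exists_forall_apply_point_eq (c : C₀(ℕ, ℝ)) : ∃ z : oddFunctions g.Space,
    (∀ n, z.1 (g.point (.inl n)) = c n) ∧ ∀ ξ, z.1 (g.point (.inr ξ)) = 0 := by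
  have hc : Filter.Tendsto c Filter.cofinite (nhds 0) :=
    Filter.cocompact_eq_cofinite ℕ ▸ c.zero_at_infty'
  have hsum : Summable fun n => c n • (g.coord (.inl n)).1 :=
    summable_smul_of_pairwise_mul_eq_zero (fun n => g.norm_coord_le _) hc g.pairwise_coord_inl_mul
  have happly : ∀ x, (∑' n, c n • (g.coord (.inl n)).1) x = ∑' n, c n * x.1 (.inl n) :=
    fun x => (ContinuousMap.tsum_apply hsum x).symm
  refine ⟨⟨∑' n, c n • (g.coord (.inl n)).1, tsum_mem (isClosed_oddFunctions g.Space) fun n =>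
    Submodule.smul_mem _ _ (g.coord _).2⟩, fun n => ?_, fun ξ => ?_⟩
  · rw [happly, tsum_eq_single n fun m hm => by
      rw [coe_point, g.signs_inl_of_ne (Sum.inl_injective.ne hm.symm), SignType.coe_zero, mul_zero]]
    simp
  · simp [happly]

/-- The closed set of those points of the space of `g` whose coordinates in `ℕ` all vanish: it
consists of `0` and of the points `± g.point ξ` for `ξ` in `I`. -/
def limitSet : Set g.Space := {x | ∀ n, x.1 (.inl n) = 0}

lemma isClosed_limitSet : IsClosed g.limitSet := by
  simp only [limitSet, ofPred_forall]
  exact isClosed_iInter fun n => isClosed_eq ((continuous_apply _).comp continuous_subtype_val)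
    continuous_const

lemma pairwise_coord_inr_restrict_mul : Pairwise fun ξ η : I =>
    (g.coord (.inr ξ)).1.restrict g.limitSet * (g.coord (.inr η)).1.restrict g.limitSet = 0 := by
  intro ξ η hξη
  ext ⟨x, hx⟩
  have hpt : ∀ ζ, g.signs (.inr ζ) (.inr ξ) = 0 ∨ g.signs (.inr ζ) (.inr η) = 0 := fun ζ => by
    rcases eq_or_ne ζ ξ with rfl | h
    · exact .inr (g.signs_inr_inr_of_ne hξη)
    · exact .inl (g.signs_inr_inr_of_ne h)
  rcases g.eq_zero_or_exists_eq_point x with rfl | ⟨n | ζ, rfl | rfl⟩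
  · simp
  · simpa using hx n
  · simpa using hx n
  · rcases hpt ζ with h | h <;> simp [h]
  · rcases hpt ζ with h | h <;> simp [h]

end Coord

section Quotient

variable {I : Type*} (g : SignedFamily I) [TopologicalSpace I] [DiscreteTopology I]

/-- The restriction of odd functions to the points indexed by `I`. -/
noncomputable def restrictLimits : oddFunctions g.Space →L[ℝ] C₀(I, ℝ) :=
  restrictPoints (E := oddFunctions g.Space) (Submodule.subtypeL _) (fun ξ => g.point (.inr ξ))
    tendsto_apply_point_inr

@[simp]
lemma restrictLimits_apply (z : oddFunctions g.Space) (ξ : I) :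
    g.restrictLimits z ξ = z.1 (g.point (.inr ξ)) := rfl

lemma surjective_restrictLimits : Surjective g.restrictLimits := fun c => by
  have : CompactSpace g.limitSet := isCompact_iff_compactSpace.1 g.isClosed_limitSet.isCompact
  have hc : Filter.Tendsto c Filter.cofinite (nhds 0) :=
    Filter.cocompact_eq_cofinite I ▸ c.zero_at_infty'
  have hsum : Summable fun ξ => c ξ • (g.coord (.inr ξ)).1.restrict g.limitSet :=
    summable_smul_of_pairwise_mul_eq_zero (fun ξ => (ContinuousMap.norm_le _ zero_le_one).2
      fun x => abs_cast_signType_le_one _) hc g.pairwise_coord_inr_restrict_mul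
  obtain ⟨f, hf⟩ := ContinuousMap.exists_restrict_eq g.isClosed_limitSet
    (∑' ξ, c ξ • (g.coord (.inr ξ)).1.restrict g.limitSet)
  have hfD : ∀ x : g.limitSet, f x = ∑' ξ, c ξ * x.1.1 (.inr ξ) := fun x =>
    congr($hf x).trans (ContinuousMap.tsum_apply hsum x).symm
  refine ⟨⟨oddPart _ f, oddPart_mem_oddFunctions f⟩, ?_⟩
  ext ξ
  have hcξ : ∑' η, c η * (g.signs (.inr ξ) (.inr η) : ℝ) = c ξ := by
    rw [tsum_eq_single ξ fun η h => by simp [g.signs_inr_inr_of_ne h.symm]]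
    simp
  have hpos := hfD ⟨g.point (.inr ξ), fun n => rfl⟩
  have hneg := hfD ⟨-g.point (.inr ξ), fun n => by simp⟩
  simp only [coe_neg, coe_point, Pi.neg_apply, SignType.coe_neg, mul_neg, tsum_neg, hcξ]
    at hpos hneg
  rw [restrictLimits_apply, oddPart_apply, hpos, hneg]
  ring

lemma nonempty_ker_equiv : Nonempty (g.restrictLimits.ker ≃L[ℝ] C₀(ℕ, ℝ)) := by
  have : CompleteSpace g.restrictLimits.ker := g.restrictLimits.isClosed_ker.completeSpace_coe
  have hker : ∀ y : g.restrictLimits.ker, ∀ ξ, y.1.1 (g.point (.inr ξ)) = 0 := fun y ξ =>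
    congr($(LinearMap.mem_ker.1 y.2) ξ)
  refine nonempty_equiv_zeroAtInfty_of_restrictPoints (E := g.restrictLimits.ker)
    ((Submodule.subtypeL _).comp (Submodule.subtypeL _)) (fun n => g.point (.inl n))
    (fun y => tendsto_apply_point_inl (hker y)) (fun y hy => ?_) fun c => ?_
  · refine Subtype.ext (norm_le_zero_iff.1 (norm_le_of_forall_point fun j => ?_))
    rcases j with n | ξ
    exacts [(abs_eq_zero.2 (hy n)).le, (abs_eq_zero.2 (hker y ξ)).le]
  · obtain ⟨z, hz, hz0⟩ := g.exists_forall_apply_point_eq c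
    exact ⟨⟨z, LinearMap.mem_ker.2 (ZeroAtInftyContinuousMap.ext hz0)⟩, hz⟩

lemma nonempty_quotient_equiv :
    Nonempty ((oddFunctions g.Space ⧸ g.restrictLimits.ker) ≃L[ℝ] C₀(I, ℝ)) :=
  ⟨quotientKerEquivOfSurjective _ g.surjective_restrictLimits⟩

end Quotient

end SignedFamily

/-! ### Functionals and their defects -/

section Functionals

variable {E J K : Type*} [NormedAddCommGroup E] [NormedSpace ℝ E]

lemma dense_span_rat [Module ℚ E] {S : Set E} (hS : Dense (Submodule.span ℝ S : Set E)) :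
    Dense (Submodule.span ℚ S : Set E) := by
  have hsmul : ∀ (r : ℝ), ∀ x ∈ closure (Submodule.span ℚ S : Set E),
      r • x ∈ closure (Submodule.span ℚ S : Set E) := fun r x hx => by
    refine Rat.denseRange_cast.induction_on (p := fun r : ℝ => r • x ∈ closure _) r
      (isClosed_closure.preimage (by fun_prop)) fun q => ?_
    refine map_mem_closure (continuous_const_smul (q : ℝ)) hx fun y hy => ?_
    rw [Rat.cast_smul_eq_qsmul]
    exact Submodule.smul_mem _ q hy
  let V : Submodule ℝ E :=
    { (Submodule.span ℚ S).toAddSubmonoid.topologicalClosure with smul_mem' := hsmul }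
  have hle : Submodule.span ℝ S ≤ V :=
    Submodule.span_le.2 (Submodule.subset_span.trans subset_closure)
  exact dense_closure.1 (hS.mono hle)

lemma isApprox_apply_of_dense_span {S : Set E} (hS : Dense (Submodule.span ℝ S : Set E))
    {W : Submodule ℚ (K → ℝ)} {l : K → E →ₗ[ℝ] ℝ} {C : ℝ} (hC : 0 ≤ C)
    (hl : ∀ k z, |l k z| ≤ C * ‖z‖) (hW : ∀ x ∈ S, (fun k => l k x) ∈ W) (z : E) :
    IsApprox W fun k => l k z := by
  let _ : Module ℚ E := Module.compHom E (algebraMap ℚ ℝ)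
  let Λ : E →ₗ[ℚ] K → ℝ := (LinearMap.pi l).restrictScalars ℚ
  have hΛ : Submodule.span ℚ S ≤ W.comap Λ := Submodule.span_le.2 hW
  obtain ⟨w, hw, hzw⟩ := (dense_span_rat hS).exists_dist_lt z
    (ε := 1 / (5 * (C + 1))) (by positivity)
  refine ⟨1 / 5, by norm_num, Λ w, hΛ hw, fun k => ?_⟩
  calc |l k z - l k w| ≤ C * ‖z - w‖ := by simpa only [map_sub] using hl k (z - w)
    _ ≤ (C + 1) * (1 / (5 * (C + 1))) := by
      gcongr
      exacts [(lt_add_one C).le, (dist_eq_norm z w ▸ hzw).le]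
    _ = (1 / 5 : ℚ) := by push_cast; field_simp

lemma sum_abs_apply_le_of_forall_norm_sum_smul_le {l : E →ₗ[ℝ] ℝ} {C : ℝ} (hC : 0 ≤ C)
    (hl : ∀ z, |l z| ≤ C * ‖z‖) {x : J → E} {F : Finset J}
    (h : ∀ s : J → ℝ, (∀ j, |s j| ≤ 1) → ‖∑ j ∈ F, s j • x j‖ ≤ 1) : ∑ j ∈ F, |l (x j)| ≤ C :=
  calc ∑ j ∈ F, |l (x j)|
      = l (∑ j ∈ F, (SignType.sign (l (x j)) : ℝ) • x j) := by simp [map_sum, sign_mul_self]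
    _ ≤ C * ‖∑ j ∈ F, (SignType.sign (l (x j)) : ℝ) • x j‖ := (le_abs_self _).trans (hl _)
    _ ≤ C := mul_le_of_le_one_right hC (h _ fun _ => abs_cast_signType_le_one _)

lemma exists_one_le_norm_symm_mul_abs_apply [TopologicalSpace K] [CompactSpace K]
    (T : E ≃L[ℝ] C(K, ℝ)) {x : E} (hx : 1 ≤ ‖x‖) :
    ∃ d, 1 ≤ ‖(T.symm : C(K, ℝ) →L[ℝ] E)‖ * |T x d| := by
  have hTx : 1 ≤ ‖(T.symm : C(K, ℝ) →L[ℝ] E)‖ * ‖T x‖ :=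
    hx.trans (by simpa using (T.symm : C(K, ℝ) →L[ℝ] E).le_opNorm (T x))
  have hM : 0 < ‖(T.symm : C(K, ℝ) →L[ℝ] E)‖ :=
    pos_of_mul_pos_left (zero_lt_one.trans_le hTx) (norm_nonneg _)
  by_contra! h
  refine hTx.not_gt ((lt_div_iff₀' hM).1 ((ContinuousMap.norm_lt_iff _ (by positivity)).2
    fun d => (lt_div_iff₀' hM).2 (h d)))

lemma exists_functionals_of_equiv [TopologicalSpace K] [CompactSpace K] (T : E ≃L[ℝ] C(K, ℝ))
    {x : J → E} (hx : ∀ k, 1 ≤ ‖x k‖) : ∃ C ≥ 0, ∃ l : J → E →ₗ[ℝ] ℝ,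
      (∀ k z, |l k z| ≤ C * ‖z‖) ∧ (∀ k, 1 ≤ |l k (x k)|) ∧ ∀ y, ∃ z, ∀ k, l k z = |l k y| := by
  choose d hd using fun k => exists_one_le_norm_symm_mul_abs_apply T (hx k)
  let M := ‖(T.symm : C(K, ℝ) →L[ℝ] E)‖
  have hM : 0 ≤ M := norm_nonneg (T.symm : C(K, ℝ) →L[ℝ] E)
  let l (k : J) : E →ₗ[ℝ] ℝ :=
    M • (ContinuousMap.evalCLM ℝ (d k) ∘L (T : E →L[ℝ] C(K, ℝ))).toLinearMap
  have hl : ∀ k z, l k z = M * T z (d k) := fun _ _ => rfl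
  have habs : ∀ k z, |l k z| = M * |T z (d k)| := fun k z => by
    rw [hl, abs_mul, abs_of_nonneg hM]
  refine ⟨M * ‖(T : E →L[ℝ] C(K, ℝ))‖, by positivity, l, fun k z => ?_,
    fun k => (hd k).trans_eq (habs k _).symm, fun y => ⟨T.symm |T y|, fun k => ?_⟩⟩
  · rw [habs, mul_assoc]
    gcongr
    exact ((T z).norm_coe_le_norm _).trans ((T : E →L[ℝ] C(K, ℝ)).le_opNorm z)
  · rw [hl, habs, T.apply_symm_apply, ContinuousMap.abs_apply]

end Functionals

section Biorthogonal

variable {J X : Type*} [TopologicalSpace X]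

lemma abs_sub_sum_smul_apply_lt {φ : J → C(X, ℝ)} {p : J → X} (hφ : ∀ j, φ j (p j) = 1)
    (hφ₀ : Pairwise fun i j => φ i (p j) = 0) {f : C(X, ℝ)} {F : Finset J} {ε : ℝ} (hε : 0 < ε)
    (hf : ∀ j ∉ F, |f (p j)| < ε) (j : J) : |(f - ∑ i ∈ F, f (p i) • φ i) (p j)| < ε := by
  have h₀ : ∀ i, i ≠ j → f (p i) * φ i (p j) = 0 := fun i hij => by rw [hφ₀ hij, mul_zero]
  simp only [ContinuousMap.sub_apply, ContinuousMap.sum_apply, ContinuousMap.smul_apply,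
    smul_eq_mul]
  by_cases hj : j ∈ F
  · rwa [Finset.sum_eq_single_of_mem j hj fun i _ => h₀ i, hφ, mul_one, sub_self, abs_zero]
  · rw [Finset.sum_eq_zero fun i hi => h₀ i (ne_of_mem_of_not_mem hi hj), sub_zero]
    exact hf j hj

end Biorthogonal

namespace SignedFamily

variable {I : Type*} (g : SignedFamily I)

lemma exists_mem_span_coord_dist_lt (z : oddFunctions g.Space) {ε : ℝ} (hε : 0 < ε) :
    ∃ y ∈ Submodule.span ℝ (range g.coord), dist z y < ε := by
  obtain ⟨F, hF⟩ : ∃ F : Finset I, ∀ ξ ∉ F, |z.1 (g.point (.inr ξ))| < ε / 2 := by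
    have h := Metric.tendsto_nhds.1 (tendsto_apply_point_inr z) _ (half_pos hε)
    exact ⟨h.toFinset, fun ξ hξ => by simpa using hξ⟩
  let w := ∑ ξ ∈ F, z.1 (g.point (.inr ξ)) • g.coord (.inr ξ)
  have hw : ∀ ξ, |(z - w).1 (g.point (.inr ξ))| < ε / 2 := fun ξ => by
    have h := abs_sub_sum_smul_apply_lt (φ := fun ξ => (g.coord (.inr ξ)).1)
      (p := fun ξ => g.point (.inr ξ)) (by simp)
      (fun ξ η h => by simp [g.signs_inr_inr_of_ne h.symm]) (half_pos hε) hF ξ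
    simpa [w] using h
  obtain ⟨N, hN⟩ : ∃ N : Finset ℕ, ∀ n ∉ N, |(z - w).1 (g.point (.inl n))| < ε / 2 :=
    ⟨(finite_setOf_le_abs_point_inl (half_pos hε) hw).toFinset, fun n hn => by simpa using hn⟩
  let v := ∑ n ∈ N, (z - w).1 (g.point (.inl n)) • g.coord (.inl n)
  have hspan : ∀ j (r : ℝ), r • g.coord j ∈ Submodule.span ℝ (range g.coord) := fun j r =>
    Submodule.smul_mem _ _ (Submodule.subset_span (mem_range_self _))
  refine ⟨w + v, add_mem (sum_mem fun _ _ => hspan _ _) (sum_mem fun _ _ => hspan _ _), ?_⟩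
  rw [dist_eq_norm, ← sub_sub]
  refine (norm_le_of_forall_point fun j => ?_).trans_lt (half_lt_self hε)
  rcases j with n | ξ
  · have h := abs_sub_sum_smul_apply_lt (φ := fun n => (g.coord (.inl n)).1)
      (p := fun n => g.point (.inl n)) (by simp)
      (fun m n h => by simp [g.signs_inl_of_ne (Sum.inl_injective.ne h.symm)]) (half_pos hε) hN n
    simpa [v] using h.le
  · simpa [v] using (hw ξ).le

/-- The coordinate function at `ξ` with the terms of index less than `m` removed from its values
at the points indexed by `ℕ`. -/
noncomputable def coordTail (m : ℕ) (ξ : I) : oddFunctions g.Space :=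
  g.coord (.inr ξ) - ∑ n ∈ Finset.range m, (g.sgn ξ n : ℝ) • g.coord (.inl n)

lemma coordTail_apply (m : ℕ) (ξ : I) (x : g.Space) : (g.coordTail m ξ).1 x =
    x.1 (.inr ξ) - ∑ n ∈ Finset.range m, (g.sgn ξ n : ℝ) * x.1 (.inl n) := by
  simp [coordTail, ContinuousMap.sum_apply]

lemma coordTail_point_inl (m : ℕ) (ξ : I) (n : ℕ) :
    (g.coordTail m ξ).1 (g.point (.inl n)) = if n < m then 0 else (g.sgn ξ n : ℝ) := by
  have h₀ : ∀ i ∈ Finset.range m, i ≠ n →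
      (g.sgn ξ i : ℝ) * (g.signs (.inl n) (.inl i) : ℝ) = 0 := fun i _ hin => by
    rw [g.signs_inl_of_ne (Sum.inl_injective.ne hin.symm), SignType.coe_zero, mul_zero]
  rw [coordTail_apply, coe_point, signs_inl_inr]
  split_ifs with hnm
  · rw [Finset.sum_eq_single_of_mem n (Finset.mem_range.2 hnm) h₀]
    simp
  · rw [Finset.sum_eq_zero fun i hi => h₀ i hi fun hin => hnm (hin ▸ Finset.mem_range.1 hi),
      sub_zero]

lemma coordTail_point_inr (m : ℕ) (ξ η : I) :
    (g.coordTail m ξ).1 (g.point (.inr η)) = g.signs (.inr η) (.inr ξ) := by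
  simp [coordTail_apply]

lemma norm_coordTail_le (m : ℕ) (ξ : I) : ‖g.coordTail m ξ‖ ≤ 1 :=
  norm_le_of_forall_point fun j => by
    rcases j with n | η
    · rw [coordTail_point_inl]
      split_ifs
      exacts [abs_zero.trans_le zero_le_one, abs_cast_signType_le_one _]
    · rw [coordTail_point_inr]
      exact abs_cast_signType_le_one _

lemma coordTail_mul_coordTail_eq_zero {m : ℕ} {ξ η : I} (hξη : ξ ≠ η)
    (hm : ∀ n ∈ support (g.sgn ξ) ∩ support (g.sgn η), n < m) :
    (g.coordTail m ξ).1 * (g.coordTail m η).1 = 0 :=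
  mul_eq_zero_of_forall_point fun j => by
    rcases j with n | ζ
    · simp only [coordTail_point_inl]
      by_contra! h
      exact h.1 (if_pos (hm n ⟨fun h₀ => h.1 (by simp [h₀]), fun h₀ => h.2 (by simp [h₀])⟩))
    · simp only [coordTail_point_inr]
      rcases eq_or_ne ζ ξ with rfl | hζ
      · exact .inr (by rw [g.signs_inr_inr_of_ne hξη, SignType.coe_zero])
      · exact .inl (by rw [g.signs_inr_inr_of_ne hζ, SignType.coe_zero])

lemma eventually_pairwise_coordTail_mul (F : Finset I) : ∀ᶠ m in Filter.atTop,
    (F : Set I).Pairwise fun ξ η => (g.coordTail m ξ).1 * (g.coordTail m η).1 = 0 := by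
  have hfin : (⋃ p ∈ (F : Set I).offDiag, support (g.sgn p.1) ∩ support (g.sgn p.2)).Finite :=
    F.finite_toSet.offDiag.biUnion fun p hp => g.finite_inter hp.2.2
  obtain ⟨m₀, hm₀⟩ := hfin.bddAbove
  filter_upwards [Filter.eventually_gt_atTop m₀] with m hm ξ hξ η hη hξη
  exact g.coordTail_mul_coordTail_eq_zero hξη fun n hn =>
    (hm₀ (mem_iUnion₂.2 ⟨(ξ, η), ⟨hξ, hη, hξη⟩, hn⟩)).trans_lt hm

section Functional

variable {g} {l : oddFunctions g.Space →ₗ[ℝ] ℝ} {C : ℝ}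

lemma sum_abs_apply_le_of_pairwise_mul_eq_zero (hC : 0 ≤ C) (hl : ∀ z, |l z| ≤ C * ‖z‖)
    {J : Type*} {F : Finset J} {φ : J → oddFunctions g.Space} (hφ : ∀ i ∈ F, ‖φ i‖ ≤ 1)
    (hd : (F : Set J).Pairwise fun i j => (φ i).1 * (φ j).1 = 0) : ∑ i ∈ F, |l (φ i)| ≤ C :=
  sum_abs_apply_le_of_forall_norm_sum_smul_le (E := oddFunctions g.Space) hC hl fun s hs => by
    rw [← Submodule.norm_coe, Submodule.coe_sum]
    exact norm_sum_smul_le_of_pairwise_mul_eq_zero (φ := fun i => (φ i).1) zero_le_one hφ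
      (fun i _ => hs i) hd

lemma sum_abs_apply_coord_inl_le (hC : 0 ≤ C) (hl : ∀ z, |l z| ≤ C * ‖z‖) (F : Finset ℕ) :
    ∑ n ∈ F, |l (g.coord (.inl n))| ≤ C :=
  sum_abs_apply_le_of_pairwise_mul_eq_zero hC hl (fun _ _ => g.norm_coord_le _)
    (g.pairwise_coord_inl_mul.set_pairwise _)

/-- The defect of a functional `l` at `ξ`: the part of the value of `l` at the coordinate function
of `ξ` which is not accounted for by its values at the coordinate functions indexed by `ℕ`. -/
noncomputable def defect (l : oddFunctions g.Space →ₗ[ℝ] ℝ) (ξ : I) : ℝ :=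
  l (g.coord (.inr ξ)) - ∑' n, l (g.coord (.inl n)) * g.sgn ξ n

lemma tendsto_apply_coordTail (hC : 0 ≤ C) (hl : ∀ z, |l z| ≤ C * ‖z‖) (ξ : I) :
    Filter.Tendsto (fun m => l (g.coordTail m ξ)) Filter.atTop (nhds (defect l ξ)) := by
  have hsum : Summable fun n => l (g.coord (.inl n)) * (g.sgn ξ n : ℝ) :=
    summable_mul_of_sum_abs_le (sum_abs_apply_coord_inl_le hC hl) fun _ =>
      abs_cast_signType_le_one _
  have hcoord : ∀ m, l (g.coordTail m ξ) = l (g.coord (.inr ξ)) -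
      ∑ n ∈ Finset.range m, l (g.coord (.inl n)) * g.sgn ξ n := fun m => by
    simp only [coordTail, map_sub, map_sum, map_smul, smul_eq_mul, mul_comm]
  simp only [hcoord]
  exact hsum.hasSum.tendsto_sum_nat.const_sub _

lemma sum_abs_defect_le (hC : 0 ≤ C) (hl : ∀ z, |l z| ≤ C * ‖z‖) (F : Finset I) :
    ∑ ξ ∈ F, |defect l ξ| ≤ C := by
  refine le_of_tendsto (tendsto_finsetSum _ fun ξ _ => (tendsto_apply_coordTail hC hl ξ).abs) ?_
  filter_upwards [g.eventually_pairwise_coordTail_mul F] with m hm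
  exact sum_abs_apply_le_of_pairwise_mul_eq_zero hC hl (fun ξ _ => g.norm_coordTail_le m ξ) hm

lemma countable_support_defect (hC : 0 ≤ C) (hl : ∀ z, |l z| ≤ C * ‖z‖) :
    (support (defect l)).Countable :=
  (summable_abs_iff.1 (summable_of_sum_le (fun _ => abs_nonneg _)
    (sum_abs_defect_le hC hl))).countable_support

end Functional

variable {g}

-- If `ξ` has no defect, the values on `coord ξ` are a pairing; an odd function on which the
-- functionals take the absolute values would be approximable by rational combinations of
-- coordinate functions, hence so would be the absolute value of the pairing.
lemma IsAbsIndependent.exists_forall_exists_ne (hg : g.IsAbsIndependent)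
    {l : ℕ → oddFunctions g.Space →ₗ[ℝ] ℝ} {C : ℝ} (hC : 0 ≤ C) (hl : ∀ k z, |l k z| ≤ C * ‖z‖)
    (hdiag : ∀ k, 1 ≤ |l k (g.coord (.inl k))|) :
    ∃ ξ, ∀ z, ∃ k, l k z ≠ |l k (g.coord (.inr ξ))| := by
  let ν (k n : ℕ) : ℝ := l k (g.coord (.inl n))
  let κ (ξ : I) (k : ℕ) : ℝ := defect (l k) ξ
  let A := range κ ∪ range fun n k => ν k n
  let W := Submodule.span ℚ (A ∪ range fun η => pairing ν (g.sgn η))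
  have hν : HasLargeDiagonal ν := ⟨⟨C, fun k => sum_abs_apply_coord_inl_le hC (hl k)⟩, hdiag⟩
  have hκ : (support κ).Countable :=
    (countable_iUnion fun k => countable_support_defect hC (hl k)).mono fun ξ hξ =>
      mem_iUnion.2 (Function.ne_iff.1 hξ)
  have hA : A.Countable := (((hκ.image κ).insert 0).mono
    (range_subset_insert_image_support κ)).union (countable_range _)
  have hcoord : ∀ ξ k, l k (g.coord (.inr ξ)) = κ ξ k + pairing ν (g.sgn ξ) k := fun ξ k =>
    (sub_add_cancel _ _).symm
  have hmem : ∀ x ∈ range g.coord, (fun k => l k x) ∈ W := by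
    rintro _ ⟨n | ξ, rfl⟩
    · exact Submodule.subset_span (.inl (.inr ⟨n, rfl⟩))
    · rw [funext (hcoord ξ)]
      exact add_mem (Submodule.subset_span (.inl (.inl ⟨ξ, rfl⟩)))
        (Submodule.subset_span (.inr ⟨ξ, rfl⟩))
  by_contra! h
  refine hg hν hA (hκ.mono fun ξ hξ => mem_support.2 fun hκξ => hξ ?_)
  obtain ⟨z, hz⟩ := h ξ
  have hpair : (fun k => |pairing ν (g.sgn ξ) k|) = fun k => l k z := funext fun k => by
    rw [hz, hcoord, hκξ, Pi.zero_apply, zero_add]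
  rw [hpair]
  exact isApprox_apply_of_dense_span (E := oddFunctions g.Space) (S := range g.coord)
    (fun x => Metric.mem_closure_iff.2 fun _ => g.exists_mem_span_coord_dist_lt x) hC hl hmem z

lemma IsAbsIndependent.isEmpty_equiv (hg : g.IsAbsIndependent) {K : Type*} [TopologicalSpace K]
    [CompactSpace K] : IsEmpty (oddFunctions g.Space ≃L[ℝ] C(K, ℝ)) := by
  refine ⟨fun T => ?_⟩
  obtain ⟨C, hC, l, hl, hdiag, habs⟩ := exists_functionals_of_equiv (E := oddFunctions g.Space) T
    fun k : ℕ => g.one_le_norm_coord (.inl k)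
  obtain ⟨ξ, hξ⟩ := hg.exists_forall_exists_ne hC hl hdiag
  obtain ⟨z, hz⟩ := habs (g.coord (.inr ξ))
  obtain ⟨k, hk⟩ := hξ z
  exact hk (hz k)

end SignedFamily

end

open Cardinal in
/-- There is a Banach space `Z` — which may be chosen to be a 1-complemented subspace
of `C(L)` for a compact Hausdorff space `L` — together with a closed subspace `Y ⊆ Z`
isomorphic to `c₀` such that `Z/Y` is isomorphic to `c₀(Γ)` for an index set `Γ` of
cardinality `𝔠`, while `Z` is not a C-space. (Here `c₀` is realized as `C₀(ℕ, ℝ)` and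
`c₀(Γ)` as `C₀(Γ, ℝ)` for a discrete space `Γ`.) -/
theorem statement19 :
    ∃ (L : Type) (_ : TopologicalSpace L) (_ : CompactSpace L) (_ : T2Space L)
      (Z : Submodule ℝ C(L, ℝ)) (_ : IsClosed (Z : Set C(L, ℝ))),
      -- Z is 1-complemented in C(L)
      (∃ P : C(L, ℝ) →L[ℝ] C(L, ℝ), ‖P‖ = 1 ∧ (∀ f, P (P f) = P f) ∧
        Set.range ⇑P = (Z : Set C(L, ℝ))) ∧
      -- Y ⊆ Z is closed and isomorphic to c₀
      ∃ (Y : Submodule ℝ ↥Z) (_ : IsClosed (Y : Set ↥Z)),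
        Nonempty (↥Y ≃L[ℝ] C₀(ℕ, ℝ)) ∧
        -- Z/Y is isomorphic to c₀(Γ) with |Γ| = 𝔠
        (∃ (Γ : Type) (_ : TopologicalSpace Γ) (_ : DiscreteTopology Γ),
          #Γ = continuum ∧ Nonempty ((↥Z ⧸ Y) ≃L[ℝ] C₀(Γ, ℝ))) ∧
        -- Z is not a C-space
        ¬ IsCSpace ↥Z := by
  obtain ⟨I, g, hI, hg⟩ := SignedFamily.exists_isAbsIndependent
  let _ : TopologicalSpace I := ⊥
  have : DiscreteTopology I := ⟨rfl⟩
  refine ⟨g.Space, inferInstance, inferInstance, inferInstance, oddFunctions g.Space,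
    isClosed_oddFunctions _, ⟨oddPart _, norm_oddPart,
      fun f => oddPart_eq_self (oddPart_mem_oddFunctions f), range_oddPart⟩,
    g.restrictLimits.ker, g.restrictLimits.isClosed_ker, g.nonempty_ker_equiv,
    ⟨I, inferInstance, inferInstance, hI, g.nonempty_quotient_equiv⟩, ?_⟩
  rintro ⟨K, _, _, _, ⟨T⟩⟩
  exact hg.isEmpty_equiv.false T
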